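/- Let p be an odd prime, l a positive integer, q = p^l, and let F be the finite field with q elements (in Lean, GaloisField p l). Let ν ≥ 1 and r ≥ 0 be integers, let n′ be an odd positive integer not divisible by p, and set n = 2^ν·p^r·n′. Assume 2^{ν+1} does not divide p^l + 1. Then the number of polynomials g over F such that there exists a polynomial h with X^n + 1 = g·h and g = C (h.coeff 0)⁻¹ * h.reverse equals (p^r + 1)^t, where t is the natural number satisfying 2t = Σ_{d ∣ n′} φ(2^{ν+1}·d) / ord_{2^{ν+1}·d}(p^l), the sum running over all positive divisors d of n′, φ denoting Euler's totient function, and ord_{m}(p^l) denoting the multiplicative order of p^l modulo m (in Lean, orderOf of the element p^l of ZMod m). -/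

import Mathlib

open Polynomial

/-- The number of `ℕ`-valued functions whose values at the two points of each orbit of a
fixed-point-free involution add up to `N`. -/
lemma card_complementary_functions {α : Type*} [Fintype α] {σ : α → α}
    (hσ : Function.Involutive σ) (hfix : ∀ a, σ a ≠ a) (N t : ℕ)
    (hc : Fintype.card α = 2 * t) :
    Nat.card {e : α → ℕ // ∀ a, e a + e (σ a) = N} = (N + 1) ^ t := by
  classical
  let _ : LinearOrder α := LinearOrder.lift' (Fintype.equivFin α) (Fintype.equivFin α).injective
  have hlt {a : α} (h : ¬ a < σ a) : σ a < σ (σ a) := by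
    rw [hσ a]
    exact lt_of_le_of_ne (not_lt.mp h) (hfix a)
  let E : {e : α → ℕ // ∀ a, e a + e (σ a) = N} ≃ ({a : α // a < σ a} → Fin (N + 1)) :=
    { toFun := fun e a => ⟨e.1 a, by have := e.2 a; omega⟩
      invFun := fun c =>
        ⟨fun a => if h : a < σ a then c ⟨a, h⟩ else N - c ⟨σ a, hlt h⟩, fun a => by
          by_cases h : a < σ a
          · have h' : ¬ σ a < a := h.le.not_gt
            have := (c ⟨a, h⟩).is_le
            simp only [h, h', dif_pos, dif_neg, not_false_eq_true, hσ a]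
            omega
          · have := (c ⟨σ a, hlt h⟩).is_le
            simp only [h, hlt h, dif_pos, dif_neg, not_false_eq_true]
            omega⟩
      left_inv := fun e => by
        ext a
        by_cases h : a < σ a
        · simp [h]
        · have := e.2 a
          simp only [h, dif_neg, not_false_eq_true]
          omega
      right_inv := fun c => by
        ext a
        simp [a.2] }
  have hcard : Fintype.card {a : α // a < σ a} = t := by
    have h1 := Fintype.card_subtype_compl (fun a : α => a < σ a)
    have h2 : Fintype.card {a : α // ¬ a < σ a} = Fintype.card {a : α // a < σ a} :=
      Fintype.card_congr (hσ.toPerm.subtypeEquiv fun a => by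
        simp only [Function.Involutive.coe_toPerm, hσ a]
        exact ⟨fun h => lt_of_le_of_ne (not_lt.mp h) (hfix a), fun h => h.le.not_gt⟩)
    have h3 := Fintype.card_subtype_le (fun a : α => a < σ a)
    omega
  rw [Nat.card_congr E, Nat.card_eq_fintype_card, Fintype.card_fun, Fintype.card_fin, hcard]

namespace Polynomial

variable {F : Type*} [Field F]

/-- The monic reciprocal polynomial of `h`, when `h` has nonzero constant term. -/
noncomputable def monicReciprocal (h : F[X]) : F[X] := C (h.coeff 0)⁻¹ * h.reverse

lemma monicReciprocal_mul (f g : F[X]) :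
    (f * g).monicReciprocal = f.monicReciprocal * g.monicReciprocal := by
  simp only [monicReciprocal, mul_coeff_zero, mul_inv, C_mul, reverse_mul_of_domain]
  ring

lemma monicReciprocal_C {u : F} (hu : u ≠ 0) : (C u).monicReciprocal = 1 := by
  simp [monicReciprocal, ← C_mul, hu]

lemma monicReciprocal_one : (1 : F[X]).monicReciprocal = 1 := by
  simpa using monicReciprocal_C (one_ne_zero (α := F))

/-- `monicReciprocal` as a monoid homomorphism. -/
noncomputable def monicReciprocalHom : F[X] →* F[X] where
  toFun := monicReciprocal
  map_one' := monicReciprocal_one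
  map_mul' := monicReciprocal_mul

lemma monicReciprocal_prod {ι : Type*} (s : Finset ι) (f : ι → F[X]) :
    (∏ i ∈ s, f i).monicReciprocal = ∏ i ∈ s, (f i).monicReciprocal :=
  map_prod monicReciprocalHom f s

lemma monicReciprocal_multiset_prod (s : Multiset F[X]) :
    s.prod.monicReciprocal = (s.map monicReciprocal).prod :=
  map_multiset_prod monicReciprocalHom s

lemma monicReciprocal_pow (f : F[X]) (k : ℕ) :
    (f ^ k).monicReciprocal = f.monicReciprocal ^ k :=
  map_pow monicReciprocalHom f k

lemma monic_monicReciprocal {f : F[X]} (hf : f.coeff 0 ≠ 0) : f.monicReciprocal.Monic := by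
  have : f.trailingCoeff = f.coeff 0 := by
    rw [trailingCoeff, natTrailingDegree_eq_zero_of_constantCoeff_ne_zero hf]
  rw [Monic, monicReciprocal, leadingCoeff_mul, leadingCoeff_C, reverse_leadingCoeff, this,
    inv_mul_cancel₀ hf]

lemma coeff_zero_monicReciprocal_ne_zero {f : F[X]} (hf : f.coeff 0 ≠ 0) :
    f.monicReciprocal.coeff 0 ≠ 0 := by
  have h0 : f ≠ 0 := by rintro rfl; simp at hf
  simp [monicReciprocal, hf, h0]

lemma natDegree_reverse_of_coeff_zero_ne_zero {f : F[X]} (hf : f.coeff 0 ≠ 0) :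
    f.reverse.natDegree = f.natDegree := by
  rw [reverse_natDegree, natTrailingDegree_eq_zero_of_constantCoeff_ne_zero hf, Nat.sub_zero]

lemma reverse_reverse_of_coeff_zero_ne_zero {f : F[X]} (hf : f.coeff 0 ≠ 0) :
    f.reverse.reverse = f := by
  rw [reverse, natDegree_reverse_of_coeff_zero_ne_zero hf, reverse, reflect_reflect]

lemma natDegree_monicReciprocal {f : F[X]} (hf : f.coeff 0 ≠ 0) :
    f.monicReciprocal.natDegree = f.natDegree := by
  rw [monicReciprocal, natDegree_C_mul (inv_ne_zero hf),
    natDegree_reverse_of_coeff_zero_ne_zero hf]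

lemma monicReciprocal_monicReciprocal {f : F[X]} (hf : f.coeff 0 ≠ 0) (hm : f.Monic) :
    f.monicReciprocal.monicReciprocal = f := by
  have h : (C (f.coeff 0)⁻¹ : F[X]) * C (f.coeff 0)⁻¹⁻¹ = 1 := by
    rw [← C_mul, mul_inv_cancel₀ (inv_ne_zero hf), C_1]
  conv_lhs => rw [monicReciprocal]
  rw [monicReciprocal, reverse_mul_of_domain, reverse_C,
    reverse_reverse_of_coeff_zero_ne_zero hf, mul_coeff_zero, coeff_C_zero, coeff_zero_reverse,
    hm.leadingCoeff, mul_one, ← mul_assoc, mul_comm (C _), h, one_mul]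

lemma irreducible_monicReciprocal {f : F[X]} (hf : f.coeff 0 ≠ 0) (hm : f.Monic)
    (hi : Irreducible f) : Irreducible f.monicReciprocal := by
  have hm' := monic_monicReciprocal hf
  rw [hm'.irreducible_iff_natDegree]
  refine ⟨fun h => ?_, fun a b _ _ hab => ?_⟩
  · have := natDegree_monicReciprocal hf
    rw [h, natDegree_one] at this
    exact hi.natDegree_pos.ne this
  · have h0 := coeff_zero_monicReciprocal_ne_zero hf
    rw [← hab, mul_coeff_zero] at h0
    rw [← natDegree_monicReciprocal (left_ne_zero_of_mul h0),
      ← natDegree_monicReciprocal (right_ne_zero_of_mul h0)]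
    have h1 : f = a.monicReciprocal * b.monicReciprocal := by
      rw [← monicReciprocal_mul, hab, monicReciprocal_monicReciprocal hf hm]
    rcases hi.isUnit_or_isUnit h1 with h | h
    · exact .inl (natDegree_eq_zero_of_isUnit h)
    · exact .inr (natDegree_eq_zero_of_isUnit h)

lemma aeval_inv_of_monicReciprocal_eq_self {K : Type*} [Field K] [Algebra F K] {f : F[X]}
    (hs : f.monicReciprocal = f) {x : K} (hx0 : x ≠ 0) (hx : aeval x f = 0) :
    aeval x⁻¹ f = 0 := by
  let _ := invertibleOfNonzero hx0
  rw [← hs, monicReciprocal, map_mul]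
  have := (eval₂_reverse_eq_zero_iff (algebraMap F K) x f).mpr hx
  rw [invOf_eq_inv] at this
  rw [aeval_def x⁻¹ f.reverse, this, mul_zero]

open UniqueFactorizationMonoid

variable [DecidableEq F]

lemma normalizedFactors_prod_of_monic_irreducible {m : Multiset F[X]}
    (hm : ∀ f ∈ m, f.Monic ∧ Irreducible f) : normalizedFactors m.prod = m := by
  rw [normalizedFactors_prod_eq m fun f hf => (hm f hf).2]
  conv_rhs => rw [← Multiset.map_id m]
  exact Multiset.map_congr rfl fun f hf => (hm f hf).1.normalize_eq_self

lemma monic_of_mem_normalizedFactors {P f : F[X]} (hf : f ∈ normalizedFactors P) : f.Monic := by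
  exact (normalize_eq_self_iff_monic (irreducible_of_normalized_factor f hf).ne_zero).mp
    (normalize_normalized_factor f hf)

lemma prod_normalizedFactors_of_monic {g : F[X]} (hg : g.Monic) :
    (normalizedFactors g).prod = g :=
  eq_of_monic_of_associated
    (by simpa using monic_multiset_prod_of_monic _ id fun f (hf : f ∈ normalizedFactors g) =>
      monic_of_mem_normalizedFactors hf)
    hg (prod_normalizedFactors hg.ne_zero)

lemma normalizedFactors_monicReciprocal {h : F[X]} (hh : h.coeff 0 ≠ 0) :
    normalizedFactors h.monicReciprocal = (normalizedFactors h).map monicReciprocal := by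
  have h0 : h ≠ 0 := by rintro rfl; simp at hh
  obtain ⟨u, hu⟩ := prod_normalizedFactors h0
  obtain ⟨c, hc, hcu⟩ := Polynomial.isUnit_iff.mp u.isUnit
  have hp : h.monicReciprocal = ((normalizedFactors h).map monicReciprocal).prod := by
    conv_lhs => rw [← hu, ← hcu, monicReciprocal_mul, monicReciprocal_C hc.ne_zero, mul_one,
      monicReciprocal_multiset_prod]
  rw [hp]
  refine normalizedFactors_prod_of_monic_irreducible fun f hf => ?_
  obtain ⟨g, hg, rfl⟩ := Multiset.mem_map.mp hf
  have hg0 : g.coeff 0 ≠ 0 := by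
    obtain ⟨k, rfl⟩ := dvd_of_mem_normalizedFactors hg
    exact left_ne_zero_of_mul (mul_coeff_zero g k ▸ hh)
  exact ⟨monic_monicReciprocal hg0, irreducible_monicReciprocal hg0
    (monic_of_mem_normalizedFactors hg) (irreducible_of_normalized_factor g hg)⟩

/-- The divisors of a power of a squarefree self-reciprocal polynomial without self-reciprocal
irreducible factors that equal the monic reciprocal of their cofactor. -/
theorem ncard_monicReciprocal_cofactors {P : F[X]} (hP0 : P.coeff 0 ≠ 0)
    (hPm : P.Monic) (hsq : Squarefree P) (hPs : P.monicReciprocal = P)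
    (hfix : ∀ f ∈ normalizedFactors P, f.monicReciprocal ≠ f) {t : ℕ}
    (hcard : (normalizedFactors P).toFinset.card = 2 * t) (N : ℕ) :
    Set.ncard {g : F[X] | ∃ h, P ^ N = g * h ∧ g = h.monicReciprocal} = (N + 1) ^ t := by
  set S := (normalizedFactors P).toFinset
  have hmem {f} : f ∈ S ↔ f ∈ normalizedFactors P := Multiset.mem_toFinset
  have hm {f} (hf : f ∈ S) : f.Monic := monic_of_mem_normalizedFactors (hmem.mp hf)
  have hi {f} (hf : f ∈ S) : Irreducible f := irreducible_of_normalized_factor f (hmem.mp hf)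
  have h0 {f} (hf : f ∈ S) : f.coeff 0 ≠ 0 := by
    obtain ⟨k, hk⟩ := dvd_of_mem_normalizedFactors (hmem.mp hf)
    rw [hk, mul_coeff_zero] at hP0
    exact left_ne_zero_of_mul hP0
  have hσS {f} (hf : f ∈ S) : f.monicReciprocal ∈ S := by
    rw [hmem, ← hPs, normalizedFactors_monicReciprocal hP0]
    exact Multiset.mem_map_of_mem _ (hmem.mp hf)
  let σ : S → S := fun f => ⟨f.1.monicReciprocal, hσS f.2⟩
  have hσ : Function.Involutive σ := fun f =>
    Subtype.ext (monicReciprocal_monicReciprocal (h0 f.2) (hm f.2))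
  have hcount : ∀ f ∈ S, (normalizedFactors P).count f = 1 := fun f hf =>
    Multiset.count_eq_one_of_mem ((squarefree_iff_nodup_normalizedFactors hPm.ne_zero).mp hsq)
      (hmem.mp hf)
  have hPprod : ∏ f : S, f.1 = P := by
    rw [Finset.prod_coe_sort S (fun f => f)]
    conv_rhs => rw [← prod_normalizedFactors_of_monic hPm, Finset.prod_multiset_count]
    exact Finset.prod_congr rfl fun f hf => by rw [hcount f hf, pow_one]
  have hnf (e : S → ℕ) (a : S) : (normalizedFactors (∏ f : S, f.1 ^ e f)).count a.1 = e a := by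
    have : ∏ f : S, f.1 ^ e f = (∑ f : S, e f • ({f.1} : Multiset F[X])).prod := by
      simp [Multiset.prod_sum, Multiset.prod_nsmul]
    rw [this, normalizedFactors_prod_of_monic_irreducible, Multiset.count_sum']
    · simp [Multiset.count_nsmul, Multiset.count_singleton]
    · intro f hf
      obtain ⟨b, -, hb⟩ := Multiset.mem_sum.mp hf
      obtain rfl := Multiset.mem_singleton.mp (Multiset.mem_of_mem_nsmul hb)
      exact ⟨hm b.2, hi b.2⟩
  let Φ : {e : S → ℕ // ∀ a, e a + e (σ a) = N} → F[X] := fun e => ∏ f : S, f.1 ^ e.1 f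
  have hΦ : Function.Injective Φ := fun e e' h => Subtype.ext <| _root_.funext fun a => by
    rw [← hnf e.1 a, ← hnf e'.1 a]
    exact congrArg (fun g => (normalizedFactors g).count a.1) h
  have hrange : {g : F[X] | ∃ h, P ^ N = g * h ∧ g = h.monicReciprocal} = Set.range Φ := by
    ext g
    constructor
    · rintro ⟨h, hgh, hg⟩
      have hPN : P ^ N ≠ 0 := pow_ne_zero _ hPm.ne_zero
      have hg0 : g ≠ 0 := left_ne_zero_of_mul (hgh ▸ hPN)
      have hh0 : h ≠ 0 := right_ne_zero_of_mul (hgh ▸ hPN)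
      have hhc : h.coeff 0 ≠ 0 := by
        intro hc
        simp [hg, monicReciprocal, hc] at hg0
      have hgm : g.Monic := hg ▸ monic_monicReciprocal hhc
      have hsum : normalizedFactors g + normalizedFactors h = N • normalizedFactors P := by
        rw [← normalizedFactors_mul hg0 hh0, ← hgh, normalizedFactors_pow]
      have hsub {f} (hf : f ∈ normalizedFactors g + normalizedFactors h) : f ∈ S :=
        hmem.mpr (Multiset.mem_of_mem_nsmul (hsum ▸ hf))
      refine ⟨⟨fun f => (normalizedFactors g).count f.1, fun a => ?_⟩, ?_⟩
      · have h1 : (normalizedFactors g).count (σ a).1 = (normalizedFactors h).count a.1 := by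
          rw [hg, normalizedFactors_monicReciprocal hhc]
          by_cases ha : a.1 ∈ normalizedFactors h
          · refine Multiset.count_map_eq_count _ _ (fun x hx y hy hxy => ?_) _ ha
            have hx' := hsub (Multiset.mem_add.mpr (.inr hx))
            have hy' := hsub (Multiset.mem_add.mpr (.inr hy))
            exact congrArg Subtype.val (hσ.injective (a₁ := ⟨x, hx'⟩) (a₂ := ⟨y, hy'⟩)
              (Subtype.ext hxy))
          · rw [Multiset.count_eq_zero_of_notMem ha, Multiset.count_eq_zero]
            intro hmap
            obtain ⟨y, hy, hya⟩ := Multiset.mem_map.mp hmap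
            have hy' := hsub (Multiset.mem_add.mpr (.inr hy))
            have := hσ.injective (a₁ := ⟨y, hy'⟩) (a₂ := a) (Subtype.ext hya)
            exact ha (this ▸ hy)
        have h2 := congrArg (Multiset.count a.1) hsum
        rw [Multiset.count_add, Multiset.count_nsmul, hcount _ a.2, mul_one] at h2
        simpa only [h1] using h2
      · change ∏ f : S, f.1 ^ (normalizedFactors g).count f.1 = g
        rw [Finset.prod_coe_sort S (fun f => f ^ (normalizedFactors g).count f)]
        conv_rhs => rw [← prod_normalizedFactors_of_monic hgm]
        exact (Finset.prod_multiset_count_of_subset _ _ fun f hf =>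
          hsub (Multiset.mem_add.mpr (.inl (Multiset.mem_toFinset.mp hf)))).symm
    · rintro ⟨e, rfl⟩
      refine ⟨∏ f : S, f.1 ^ e.1 (σ f), ?_, ?_⟩
      · rw [← hPprod, ← Finset.prod_pow, ← Finset.prod_mul_distrib]
        exact Finset.prod_congr rfl fun f _ => by rw [← pow_add, e.2 f]
      · rw [monicReciprocal_prod]
        refine (Fintype.prod_equiv hσ.toPerm _ _ fun f => ?_).symm
        rw [monicReciprocal_pow]
        rfl
  rw [hrange, ← Nat.card_coe_set_eq, Nat.card_range_of_injective hΦ]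
  exact card_complementary_functions hσ
    (fun f hf => hfix f.1 (hmem.mp f.2) (congrArg Subtype.val hf)) N t (by simpa using hcard)

lemma card_toFinset_normalizedFactors_prod {ι : Type*} (s : Finset ι) (f : ι → F[X])
    (hsq : Squarefree (∏ i ∈ s, f i)) :
    (normalizedFactors (∏ i ∈ s, f i)).toFinset.card =
      ∑ i ∈ s, (normalizedFactors (f i)).toFinset.card := by
  have hcard {g : F[X]} (hg : Squarefree g) :
      (normalizedFactors g).toFinset.card = (normalizedFactors g).card :=
    Multiset.toFinset_card_of_nodup
      ((squarefree_iff_nodup_normalizedFactors hg.ne_zero).mp hg)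
  rw [hcard hsq, Finset.sum_congr rfl fun i hi =>
    hcard (hsq.squarefree_of_dvd (Finset.dvd_prod_of_mem f hi))]
  have h0 : (0 : F[X]) ∉ s.1.map f := fun h =>
    hsq.ne_zero (Multiset.prod_eq_zero h)
  have := congrArg Multiset.card (normalizedFactors_multiset_prod _ h0)
  refine this.trans ((Multiset.card_join _).trans ?_)
  rw [Multiset.map_map, Multiset.map_map]
  rfl

end Polynomial

lemma Nat.divisors_two_pow_succ_mul_sdiff {m : ℕ} (hm : Odd m) (k : ℕ) :
    (2 ^ (k + 1) * m).divisors \ (2 ^ k * m).divisors =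
      m.divisors.image (2 ^ (k + 1) * ·) := by
  have hm0 : m ≠ 0 := hm.pos.ne'
  ext e
  simp only [Finset.mem_sdiff, Nat.mem_divisors, Finset.mem_image]
  constructor
  · rintro ⟨⟨he, h0⟩, hn⟩
    have he0 : e ≠ 0 := by rintro rfl; exact h0 (zero_dvd_iff.mp he)
    obtain ⟨j, o, ho, rfl⟩ := Nat.exists_eq_two_pow_mul_odd he0
    have hom : o ∣ m :=
      (Nat.Coprime.pow_right (k + 1) ho.coprime_two_right).dvd_of_dvd_mul_left
        ((Dvd.intro_left _ rfl).trans he)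
    have hj : k + 1 ≤ j := by
      by_contra! h
      exact hn ⟨mul_dvd_mul (pow_dvd_pow 2 (by omega)) hom, by positivity⟩
    have hj' : j ≤ k + 1 := by
      refine (Nat.pow_dvd_pow_iff_le_right (x := 2) (by norm_num)).mp ?_
      exact (Nat.Coprime.pow_left j hm.coprime_two_left).dvd_of_dvd_mul_right
        ((Dvd.intro _ rfl).trans he)
    obtain rfl := le_antisymm hj hj'
    exact ⟨o, ⟨hom, hm0⟩, rfl⟩
  · rintro ⟨d, ⟨hd, -⟩, rfl⟩
    refine ⟨⟨mul_dvd_mul_left _ hd, by positivity⟩, fun h => ?_⟩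
    have h1 : 2 ^ (k + 1) ∣ 2 ^ k :=
      (Nat.Coprime.pow_left _ hm.coprime_two_left).dvd_of_dvd_mul_right
        ((Dvd.intro _ rfl).trans h.1)
    have := (Nat.pow_dvd_pow_iff_le_right (x := 2) (by norm_num)).mp h1
    omega

lemma Int.exists_odd_pow_add_one_eq {q : ℤ} (hq : Odd q) (j : ℕ) :
    ∃ c : ℤ, Odd c ∧ q ^ (2 * j + 1) + 1 = (q + 1) * c := by
  induction j with
  | zero => exact ⟨1, odd_one, by ring⟩
  | succ j ih =>
    obtain ⟨c, hc, h⟩ := ih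
    refine ⟨q ^ 2 * c - (q - 1), (hq.pow.mul hc).sub_even (hq.sub_odd odd_one), ?_⟩
    linear_combination q ^ 2 * h

lemma Nat.two_pow_dvd_add_one_of_dvd_pow_add_one {q k i : ℕ} (hq : Odd q) (hk : 2 ≤ k)
    (h : 2 ^ k ∣ q ^ i + 1) : 2 ^ k ∣ q + 1 := by
  have h4 : 4 ∣ q ^ i + 1 := (pow_dvd_pow 2 hk).trans h
  rcases Nat.even_or_odd' i with ⟨j, rfl | rfl⟩
  · obtain ⟨a, ha⟩ := hq.pow (n := j)
    rw [mul_comm, pow_mul, ha] at h4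
    obtain ⟨b, hb⟩ := h4
    ring_nf at hb
    omega
  · obtain ⟨c, hc, hqc⟩ := Int.exists_odd_pow_add_one_eq (q := q) (mod_cast hq) j
    have h1 : (2 ^ k : ℤ) ∣ (q + 1) * c := by
      rw [← hqc]
      exact_mod_cast h
    have h2 : IsCoprime (2 ^ k : ℤ) c := (Int.isCoprime_two_left.mpr hc).pow_left
    exact_mod_cast h2.dvd_of_dvd_mul_right h1

namespace Polynomial

lemma X_pow_two_pow_mul_add_one_eq_prod_cyclotomic (F : Type*) [CommRing F] [IsDomain F]
    {m : ℕ} (hm : Odd m) (k : ℕ) :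
    (X : F[X]) ^ (2 ^ k * m) + 1 = ∏ d ∈ m.divisors, cyclotomic (2 ^ (k + 1) * d) F := by
  have hm0 := hm.pos
  have h := X_pow_sub_one_mul_prod_cyclotomic_eq_X_pow_sub_one_of_dvd F
    (d := 2 ^ k * m) (n := 2 ^ (k + 1) * m)
    (mul_dvd_mul_right (pow_dvd_pow 2 k.le_succ) m) (by positivity)
  rw [Nat.divisors_two_pow_succ_mul_sdiff hm, Finset.prod_image fun a _ b _ hab =>
    Nat.eq_of_mul_eq_mul_left (by positivity) hab] at h
  have h2 : (X : F[X]) ^ (2 ^ (k + 1) * m) - 1 =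
      (X ^ (2 ^ k * m) - 1) * (X ^ (2 ^ k * m) + 1) := by
    rw [pow_succ, mul_right_comm, pow_mul _ _ 2]
    ring
  rw [h2] at h
  exact (mul_left_cancel₀ (X_pow_sub_C_ne_zero (by positivity) (1 : F)) h).symm

lemma monicReciprocal_ne_self {F : Type*} [Field F] [Fintype F] {k m : ℕ} (hk : 1 ≤ k)
    (hq : Odd (Fintype.card F))
    (hne : ¬ 2 ^ (k + 1) ∣ Fintype.card F + 1) {f : F[X]} (hm : f.Monic)
    (hi : Irreducible f) (hf : f ∣ X ^ (2 ^ k * m) + 1) : f.monicReciprocal ≠ f := by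
  intro hs
  have : Fact (Irreducible f) := ⟨hi⟩
  have := hm.finite_adjoinRoot
  have : Finite (AdjoinRoot f) := Module.finite_of_finite F
  set x := AdjoinRoot.root f
  have h2 : (2 : F) ≠ 0 := Ring.two_ne_zero fun h =>
    Nat.not_even_iff_odd.mpr hq (Nat.even_iff.mpr (FiniteField.even_card_of_char_two h))
  have h2' : (2 : AdjoinRoot f) ≠ 0 := by
    simpa only [map_ofNat] using (map_ne_zero_iff (algebraMap F (AdjoinRoot f))
      (algebraMap F (AdjoinRoot f)).injective).mpr h2
  have hroot : aeval x f = 0 := by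
    rw [AdjoinRoot.aeval_eq, AdjoinRoot.mk_self]
  have hxm : (x ^ m) ^ 2 ^ k = -1 := by
    obtain ⟨g, hg⟩ := hf
    have := congrArg (aeval x) hg
    rw [map_mul, hroot, zero_mul] at this
    simp only [map_add, map_pow, aeval_X, map_one] at this
    rw [← pow_mul, mul_comm m]
    exact eq_neg_of_add_eq_zero_left this
  have hx0 : x ≠ 0 := by
    intro h0
    rcases Nat.eq_zero_or_pos m with rfl | hm0
    · rw [pow_zero, one_pow] at hxm
      exact h2' (by linear_combination hxm)
    · rw [h0, zero_pow hm0.ne', zero_pow (by positivity)] at hxm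
      exact one_ne_zero (α := AdjoinRoot f) (by linear_combination hxm)
  have hmin : minpoly F x = f := (minpoly.eq_of_irreducible_of_monic hi hroot hm).symm
  obtain ⟨σ, hσ⟩ := minpoly.exists_algEquiv_of_root' (K := F) (x := x⁻¹) (y := x)
    (Algebra.IsAlgebraic.isAlgebraic x)
    (by rw [hmin]; exact aeval_inv_of_monicReciprocal_eq_self hs hx0 hroot)
  obtain ⟨i, rfl⟩ :=
    (FiniteField.bijective_frobeniusAlgEquivOfAlgebraic_pow F (AdjoinRoot f)).surjective σ
  have hxi : x ^ Fintype.card F ^ i.1 = x⁻¹ := by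
    rw [← hσ, AlgEquiv.coe_pow, FiniteField.coe_frobeniusAlgEquivOfAlgebraic_iterate]
  have hord : orderOf (x ^ m) = 2 ^ (k + 1) := by
    refine orderOf_eq_prime_pow ?_ ?_
    · rw [hxm]
      exact fun h => h2' (by linear_combination -h)
    · rw [pow_succ, pow_mul, hxm, neg_one_sq]
  refine hne (Nat.two_pow_dvd_add_one_of_dvd_pow_add_one hq (by omega) (i := i.1) ?_)
  rw [← hord]
  refine orderOf_dvd_of_pow_eq_one ?_
  rw [pow_right_comm, pow_succ, hxi, inv_mul_cancel₀ hx0, one_pow]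

end Polynomial

/-- Enumeration of Euclidean self-dual negacyclic codes of length `n = 2^ν·p^r·n′` over
the field `F` with `p^l` elements: if `2^(ν+1) ∤ p^l + 1`, then the number of generator
polynomials `g` with `X^n + 1 = g·h` and `g = h*` equals `(p^r + 1)^t`, where
`2t = ∑_{d ∣ n′} φ(2^(ν+1)·d) / ord_{2^(ν+1)·d}(p^l)`. -/
theorem card_euclidean_selfDual_negacyclic
    (p : ℕ) [hp : Fact p.Prime] (hodd : Odd p) (l : ℕ) (hl : 0 < l)
    (ν r n' : ℕ) (hν : 1 ≤ ν) (hn' : 0 < n') (hn'o : Odd n') (hpn' : ¬ p ∣ n')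
    (hne : ¬ 2 ^ (ν + 1) ∣ p ^ l + 1) (t : ℕ)
    (ht : 2 * t = ∑ d ∈ n'.divisors,
        (2 ^ (ν + 1) * d).totient / orderOf (((p ^ l : ℕ) : ZMod (2 ^ (ν + 1) * d)))) :
    Set.ncard {g : Polynomial (GaloisField p l) |
        ∃ h : Polynomial (GaloisField p l),
          (X : Polynomial (GaloisField p l)) ^ (2 ^ ν * p ^ r * n') + 1 = g * h ∧
            g = Polynomial.C (h.coeff 0)⁻¹ * h.reverse} = (p ^ r + 1) ^ t := by
  classical
  let _ : Fintype (GaloisField p l) := Fintype.ofFinite _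
  have hcard : Fintype.card (GaloisField p l) = p ^ l := by
    rw [← Nat.card_eq_fintype_card, GaloisField.card p l hl.ne']
  set P : (GaloisField p l)[X] := X ^ (2 ^ ν * n') + 1 with hP
  have hm0 : 2 ^ ν * n' ≠ 0 := by positivity
  have hp2 : Nat.Coprime p 2 := hodd.coprime_two_right
  have hP0 : P.coeff 0 = 1 := by simp [hP, hm0.symm]
  have hPm : P.Monic := monic_X_pow_add_C 1 hm0
  have hPs : P.monicReciprocal = P := by
    have hX : (X ^ (2 ^ ν * n') : (GaloisField p l)[X]).reverse = 1 := by
      rw [← one_mul (X ^ (2 ^ ν * n')), reverse_mul_X_pow, ← C_1, reverse_C]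
    rw [monicReciprocal, hP0, inv_one, C_1, one_mul, hP, ← C_1, reverse_add_C, hX, natDegree_X_pow,
      C_1, one_mul, add_comm]
  have hsq : Squarefree P := by
    have h : ((2 ^ ν * n' : ℕ) : GaloisField p l) ≠ 0 := by
      rw [Ne, CharP.cast_eq_zero_iff (GaloisField p l) p]
      exact fun h => (hp.out.dvd_mul.mp h).elim
        (fun h => hp.out.one_lt.ne' ((hp2.pow_right ν).eq_one_of_dvd h)) hpn'
    have := (separable_X_pow_sub_C (-1) h (neg_ne_zero.mpr one_ne_zero)).squarefree
    rwa [C_neg, C_1, sub_neg_eq_add] at this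
  have hfix : ∀ f ∈ UniqueFactorizationMonoid.normalizedFactors P, f.monicReciprocal ≠ f :=
    fun f hf => monicReciprocal_ne_self hν (hcard ▸ hodd.pow) (hcard ▸ hne)
      (monic_of_mem_normalizedFactors hf)
      (UniqueFactorizationMonoid.irreducible_of_normalized_factor f hf)
      (UniqueFactorizationMonoid.dvd_of_mem_normalizedFactors hf)
  have hS : (UniqueFactorizationMonoid.normalizedFactors P).toFinset.card = 2 * t := by
    have hprod := X_pow_two_pow_mul_add_one_eq_prod_cyclotomic (GaloisField p l) hn'o ν
    rw [hP, hprod] at hsq ⊢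
    rw [card_toFinset_normalizedFactors_prod _ _ hsq, ht]
    refine Finset.sum_congr rfl fun d hd => ?_
    have hc : p.Coprime (2 ^ (ν + 1) * d) := (hp2.pow_right _).mul_right
      ((hp.out.coprime_iff_not_dvd.mpr hpn').coprime_dvd_right (Nat.dvd_of_mem_divisors hd))
    rw [normalizedFactors_cyclotomic_card hcard hc, ← orderOf_units, ZMod.coe_unitOfCoprime]
  have hpow : (X : (GaloisField p l)[X]) ^ (2 ^ ν * p ^ r * n') + 1 = P ^ p ^ r := by
    rw [hP, add_pow_char_pow, one_pow, ← pow_mul, mul_right_comm]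
  rw [hpow]
  exact ncard_monicReciprocal_cofactors (by simp [hP0]) hPm hsq hPs hfix hS (p ^ r)
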